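/- Three-body kick-error term (paper eq. 19b): for pairwise distinct indices i, j, k and any phase-space point (x,p) with r_ij ≠ 0 and r_ik ≠ 0, the nested canonical Poisson bracket satisfies {{T, V_ij}, V_ik}(x,p) = (G² (m i)(m j)(m k) / (r_ij³ r_ik³)) · (x_ij · x_ik). -/

import Mathlib

open scoped RealInnerProductSpace BigOperators

noncomputable section

/-- Three-dimensional Euclidean space. -/
abbrev E3 : Type := EuclideanSpace ℝ (Fin 3)

/-- Phase space for `N` particles: positions and momenta. -/
abbrev Phase (N : ℕ) : Type := (Fin N → E3) × (Fin N → E3)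

/-- Gradient of a phase-space function with respect to the `k`-th position. -/
def gradPos {N : ℕ} (A : Phase N → ℝ) (k : Fin N) (w : Phase N) : E3 :=
  gradient (fun y => A (Function.update w.1 k y, w.2)) (w.1 k)

/-- Gradient of a phase-space function with respect to the `k`-th momentum. -/
def gradMom {N : ℕ} (A : Phase N → ℝ) (k : Fin N) (w : Phase N) : E3 :=
  gradient (fun y => A (w.1, Function.update w.2 k y)) (w.2 k)

/-- Canonical Poisson bracket of two phase-space functions. -/
def poisson {N : ℕ} (A B : Phase N → ℝ) (w : Phase N) : ℝ :=
  ∑ k, (⟪gradPos A k w, gradMom B k w⟫ - ⟪gradMom A k w, gradPos B k w⟫)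

/-- Kinetic energy `T = Σ_i ‖p_i‖²/(2 m_i)`. -/
def kinetic {N : ℕ} (m : Fin N → ℝ) (w : Phase N) : ℝ :=
  ∑ i, ‖w.2 i‖ ^ 2 / (2 * m i)

/-- Pair potential `V_ij = −G m_i m_j / ‖x_i − x_j‖`. -/
def pairPot {N : ℕ} (G : ℝ) (m : Fin N → ℝ) (i j : Fin N) (w : Phase N) : ℝ :=
  -(G * m i * m j) / ‖w.1 i - w.1 j‖

/-!
The potentials depend on positions only, so `{T, U} = -∑ₗ pₗ · ∇ₗU / mₗ` is linear in the momenta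
and `{{T, U}, V} = ∑ₗ ∇ₗU · ∇ₗV / mₗ`. If `U` involves only the particles `i, j` and `V` only
`i, k`, then only `l = i` contributes. For the Newtonian interaction the two gradients at `i` are
`G mᵢ mⱼ xᵢⱼ / rᵢⱼ³` and `G mᵢ mₖ xᵢₖ / rᵢₖ³`.
-/

section Gradient

variable {F : Type*} [NormedAddCommGroup F] [InnerProductSpace ℝ F] [CompleteSpace F]

lemma hasGradientAt_norm_sq_div_two_mul {c : ℝ} (hc : c ≠ 0) (y : F) :
    HasGradientAt (fun z => ‖z‖ ^ 2 / (2 * c)) (c⁻¹ • y) y := by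
  simp only [div_eq_mul_inv]
  refine ((hasStrictFDerivAt_norm_sq y).hasFDerivAt.mul_const (2 * c)⁻¹).congr_fderiv ?_
  ext v
  simp only [smul_apply, coe_innerSL_apply, nsmul_eq_mul, Nat.cast_ofNat, smul_eq_mul, map_smul,
    InnerProductSpace.toDual_apply_apply]
  field_simp

lemma hasGradientAt_div_norm (c : ℝ) {y : F} (hy : y ≠ 0) :
    HasGradientAt (fun z => c / ‖z‖) (-(c / ‖y‖ ^ 3) • y) y := by
  have hnorm : ‖y‖ ≠ 0 := norm_ne_zero_iff.mpr hy
  have hderiv : HasFDerivAt (fun z : F => √(‖z‖ ^ 2)) _ y :=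
    (hasStrictFDerivAt_norm_sq y).hasFDerivAt.sqrt (pow_ne_zero 2 hnorm)
  simp only [Real.sqrt_sq (norm_nonneg _)] at hderiv
  refine (((hasDerivAt_inv hnorm).comp_hasFDerivAt y hderiv).const_mul c).congr_fderiv ?_
  ext v
  simp only [neg_smul, neg_apply, smul_apply, coe_innerSL_apply, nsmul_eq_mul, Nat.cast_ofNat,
    smul_eq_mul, map_neg, map_smul, InnerProductSpace.toDual_apply_apply]
  field_simp

end Gradient

section PartialGradients

variable {N : ℕ}

lemma gradMom_eq_gradient_of_eq_sum {A : Phase N → ℝ} {f : Fin N → E3 → ℝ} {w : Phase N}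
    (hA : ∀ p, A (w.1, p) = ∑ a, f a (p a)) (l : Fin N) :
    gradMom A l w = gradient (f l) (w.2 l) := by
  have hsplit (y : E3) : A (w.1, Function.update w.2 l y) =
      f l y + ∑ a ∈ Finset.univ.erase l, f a (w.2 a) := by
    rw [hA, ← Finset.add_sum_erase _ _ (Finset.mem_univ l), Function.update_self]
    congr 1
    refine Finset.sum_congr rfl fun a ha => ?_
    rw [Function.update_of_ne (Finset.ne_of_mem_erase ha)]
  simp only [gradMom, gradient, hsplit, fderiv_add_const]

lemma gradMom_comp_fst (U : (Fin N → E3) → ℝ) (l : Fin N) (w : Phase N) :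
    gradMom (fun w => U w.1) l w = 0 :=
  gradient_fun_const (w.2 l) (U w.1)

lemma gradMom_kinetic {m : Fin N → ℝ} {l : Fin N} (hm : m l ≠ 0) (w : Phase N) :
    gradMom (kinetic m) l w = (m l)⁻¹ • w.2 l :=
  (gradMom_eq_gradient_of_eq_sum (f := fun a y => ‖y‖ ^ 2 / (2 * m a)) (fun _ => rfl) l).trans
    (hasGradientAt_norm_sq_div_two_mul hm (w.2 l)).gradient

lemma gradPos_comp_sub_left {i j : Fin N} (hij : i ≠ j) {u : E3 → ℝ} {a : E3} {w : Phase N}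
    (hu : HasGradientAt u a (w.1 i - w.1 j)) :
    gradPos (fun w => u (w.1 i - w.1 j)) i w = a := by
  simp only [gradPos, Function.update_self, Function.update_of_ne hij.symm]
  exact HasGradientAt.gradient ((hasFDerivAt_comp_sub _).mpr hu.hasFDerivAt)

lemma gradPos_comp_sub_of_ne {i j l : Fin N} (hi : l ≠ i) (hj : l ≠ j) (u : E3 → ℝ)
    (w : Phase N) : gradPos (fun w => u (w.1 i - w.1 j)) l w = 0 := by
  simp only [gradPos, Function.update_of_ne hi.symm, Function.update_of_ne hj.symm,
    gradient_fun_const]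

end PartialGradients

section Brackets

variable {N : ℕ} {m : Fin N → ℝ}

lemma poisson_comp_fst_right (A : Phase N → ℝ) (U : (Fin N → E3) → ℝ) (w : Phase N) :
    poisson A (fun w => U w.1) w = ∑ l, -⟪gradMom A l w, gradPos (fun w => U w.1) l w⟫ := by
  simp only [poisson, gradMom_comp_fst, inner_zero_right, zero_sub]

lemma gradMom_poisson_kinetic (hm : ∀ l, m l ≠ 0) (U : (Fin N → E3) → ℝ) (l : Fin N)
    (w : Phase N) :
    gradMom (poisson (kinetic m) (fun w => U w.1)) l w =
      -((m l)⁻¹ • gradPos (fun w => U w.1) l w) := by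
  have hlinear (p : Fin N → E3) : poisson (kinetic m) (fun w => U w.1) (w.1, p) =
      ∑ a, ⟪-((m a)⁻¹ • gradPos (fun w => U w.1) a w), p a⟫ := by
    rw [poisson_comp_fst_right]
    refine Finset.sum_congr rfl fun a _ => ?_
    rw [gradMom_kinetic (hm a), inner_neg_left, real_inner_smul_left, real_inner_smul_left,
      real_inner_comm]
    rfl
  rw [gradMom_eq_gradient_of_eq_sum hlinear]
  exact HasGradientAt.gradient (innerSL ℝ _).hasFDerivAt

lemma poisson_poisson_kinetic (hm : ∀ l, m l ≠ 0) (U V : (Fin N → E3) → ℝ) (w : Phase N) :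
    poisson (poisson (kinetic m) (fun w => U w.1)) (fun w => V w.1) w =
      ∑ l, (m l)⁻¹ * ⟪gradPos (fun w => U w.1) l w, gradPos (fun w => V w.1) l w⟫ := by
  simp only [poisson_comp_fst_right, gradMom_poisson_kinetic hm, inner_neg_left, neg_neg,
    real_inner_smul_left]

theorem kick_error_three_body_general (hm : ∀ l, m l ≠ 0) {i j k : Fin N} (hij : i ≠ j)
    (hik : i ≠ k) (hjk : j ≠ k) {w : Phase N} {u v : E3 → ℝ} {a b : E3}
    (hu : HasGradientAt u a (w.1 i - w.1 j)) (hv : HasGradientAt v b (w.1 i - w.1 k)) :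
    poisson (poisson (kinetic m) (fun w => u (w.1 i - w.1 j))) (fun w => v (w.1 i - w.1 k)) w =
      (m i)⁻¹ * ⟪a, b⟫ := by
  rw [poisson_poisson_kinetic hm (fun x => u (x i - x j)) (fun x => v (x i - x k)),
    Finset.sum_eq_single_of_mem i (Finset.mem_univ i), gradPos_comp_sub_left hij hu,
    gradPos_comp_sub_left hik hv]
  intro l _ hli
  rcases eq_or_ne l j with rfl | hlj
  · rw [gradPos_comp_sub_of_ne hli hjk, inner_zero_right, mul_zero]
  · rw [gradPos_comp_sub_of_ne hli hlj, inner_zero_left, mul_zero]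

end Brackets

/-- Three-body kick-error term (paper eq. 19b):
`{{T, V_ij}, V_ik} = (G² m_i m_j m_k / (r_ij³ r_ik³)) (x_ij · x_ik)`. -/
theorem kick_error_three_body {N : ℕ} (G : ℝ) (hG : 0 < G) (m : Fin N → ℝ)
    (hm : ∀ i, 0 < m i) (i j k : Fin N) (hij : i ≠ j) (hik : i ≠ k)
    (hjk : j ≠ k) (w : Phase N) (hrij : ‖w.1 i - w.1 j‖ ≠ 0)
    (hrik : ‖w.1 i - w.1 k‖ ≠ 0) :
    poisson (poisson (kinetic m) (pairPot G m i j)) (pairPot G m i k) w =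
      G ^ 2 * m i * m j * m k / (‖w.1 i - w.1 j‖ ^ 3 * ‖w.1 i - w.1 k‖ ^ 3) *
        ⟪w.1 i - w.1 j, w.1 i - w.1 k⟫ := by
  have hmi : m i ≠ 0 := (hm i).ne'
  refine (kick_error_three_body_general (fun l => (hm l).ne') hij hik hjk
    (hasGradientAt_div_norm _ (norm_ne_zero_iff.mp hrij))
    (hasGradientAt_div_norm _ (norm_ne_zero_iff.mp hrik))).trans ?_
  simp only [real_inner_smul_left, real_inner_smul_right]
  field_simp
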